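/- arXiv:2501.11636 — 3 statements merged into one kernel-verified Lean document; each statement's English description precedes it below -/
import Mathlib

section
/- Let φ : ℕ → ℕ be an injective computable function whose range is not a computable (decidable) subset of ℕ. Then the real number x_A = Σ_{ℓ=0}^∞ 2^(−φ(ℓ)) is not a computable real number. -/
open Filter

/-- A real number `x` is computable if there is a computable sequence of rationals
approximating it to precision `2^(-n)`. -/
def IsComputableReal (x : ℝ) : Prop :=
  ∃ q : ℕ → ℚ, Computable q ∧ ∀ n : ℕ, |x - (q n : ℝ)| ≤ 2 ^ (-(n : ℤ))

/-!
If the sum `x` of a convergent series of nonnegative rationals is a computable real, then a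
computable search finds a partial sum within `2^(-n)` of `x`: test whether a partial sum is close
to a computable approximation of `x`. No later term can then be as large as `2^(-n)`. For the series
`∑ 2^(-φ ℓ)` this says that `n` can only be attained by `φ` before the index that was found, so
the range of `φ` is decidable.

The test takes place in `ℚ`, whose `Primcodable` structure numbers the pairs
`(numerator, denominator)` consecutively in the order of their codes. Arithmetic on `ℚ` is therefore
computable because the set of these codes is decidable and the increasing enumeration of an infinite
decidable set is computable.
-/

open Encodable Topology

section Computable

variable {α β : Type*} [Primcodable α] [Primcodable β]

theorem computablePred_comp {p : β → Prop} (hp : ComputablePred p) {f : α → β}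
    (hf : Computable f) : ComputablePred fun a => p (f a) := by
  classical exact (hp.decide.comp hf).computablePred

theorem computablePred_and {p q : α → Prop} (hp : ComputablePred p) (hq : ComputablePred q) :
    ComputablePred fun a => p a ∧ q a := by
  classical
  refine Computable.computablePred ((Primrec.and.to_comp.comp hp.decide hq.decide).of_eq ?_)
  exact fun a => (Bool.decide_and _ _).symm

theorem computablePred_eq {f g : α → β} (hf : Computable f) (hg : Computable g) :
    ComputablePred fun a => f a = g a :=
  computablePred_comp Primrec.eq.computablePred (hf.pair hg)

theorem computablePred_nat_lt {f g : α → ℕ} (hf : Computable f) (hg : Computable g) :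
    ComputablePred fun a => f a < g a :=
  computablePred_comp Primrec.nat_lt.computablePred (hf.pair hg)

theorem computable_nat_add {f g : α → ℕ} (hf : Computable f) (hg : Computable g) :
    Computable fun a => f a + g a :=
  Primrec.nat_add.to_comp.comp hf hg

theorem computable_nat_mul {f g : α → ℕ} (hf : Computable f) (hg : Computable g) :
    Computable fun a => f a * g a :=
  Primrec.nat_mul.to_comp.comp hf hg

theorem computable_of_computablePred_graph {f : α → β}
    (h : ComputablePred fun p : α × β => f p.1 = p.2) : Computable f := by
  classical
  have hguard : Computable fun p : α × β => if f p.1 = p.2 then some p.2 else none := by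
    simpa only [Bool.cond_decide] using
      h.decide.cond (Computable.option_some.comp Computable.snd) (Computable.const none)
  have hsearch : Computable₂ fun (a : α) (n : ℕ) =>
      (decode (α := β) n).bind fun b => if f a = b then some b else none :=
    Computable.option_bind (Computable.decode.comp Computable.snd)
      (hguard.comp ((Computable.fst.comp Computable.fst).pair Computable.snd)).to₂
  refine (Partrec.rfindOpt hsearch).of_eq_tot fun a => ?_
  have hdom : (Nat.rfindOpt fun n =>
      (decode (α := β) n).bind fun b => if f a = b then some b else none).Dom :=
    Nat.rfindOpt_dom.2 ⟨encode (f a), f a, by simp⟩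
  obtain ⟨b, hb⟩ := Part.dom_iff_mem.1 hdom
  obtain ⟨n, hn⟩ := Nat.rfindOpt_spec hb
  obtain rfl : f a = b := by
    obtain ⟨c, -, hc⟩ := Option.bind_eq_some_iff.1 hn
    split_ifs at hc with hac
    exact hac.trans (Option.some.inj hc)
  exact hb

theorem computable_sum_range {M : Type*} [AddCommMonoid M] [Primcodable M]
    (hadd : Computable₂ ((· + ·) : M → M → M)) {f : α → ℕ → M} (hf : Computable₂ f)
    {g : α → ℕ} (hg : Computable g) : Computable fun a => ∑ i ∈ Finset.range (g a), f a i := by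
  have hstep : Computable₂ fun (a : α) (p : ℕ × M) => p.2 + f a p.1 :=
    hadd.comp (Computable.snd.comp Computable.snd)
      (hf.comp Computable.fst (Computable.fst.comp Computable.snd))
  refine (Computable.nat_rec hg (Computable.const 0) hstep).of_eq fun a => ?_
  induction g a with
  | zero => rfl
  | succ n ih => rw [Finset.sum_range_succ, ← ih]

theorem computable_count {p : α → ℕ → Prop} [∀ a, DecidablePred (p a)]
    (hp : ComputablePred fun x : α × ℕ => p x.1 x.2) {g : α → ℕ} (hg : Computable g) :
    Computable fun a => Nat.count (p a) (g a) := by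
  have hind : Computable fun x : α × ℕ => if p x.1 x.2 then 1 else 0 := by
    simpa only [Bool.cond_decide] using
      hp.decide.cond (Computable.const 1) (Computable.const 0)
  refine (computable_sum_range Primrec.nat_add.to_comp hind.to₂ hg).of_eq fun a => ?_
  rw [Nat.count_eq_card_filter_range, Finset.card_filter]

theorem computablePred_exists_lt {p : α → ℕ → Prop}
    (hp : ComputablePred fun x : α × ℕ => p x.1 x.2) {g : α → ℕ} (hg : Computable g) :
    ComputablePred fun a => ∃ n < g a, p a n := by
  classical
  exact (computablePred_eq (computable_count hp hg) (Computable.const 0)).not.of_eq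
    fun a => Nat.count_ne_iff_exists

theorem computable_nth {p : ℕ → Prop} (hp : ComputablePred p) (hinf : (Set.ofPred p).Infinite) :
    Computable (Nat.nth p) := by
  classical
  have hcount : Computable (Nat.count p) :=
    computable_count (computablePred_comp hp Computable.snd) Computable.id
  refine computable_of_computablePred_graph ((computablePred_and
    (computablePred_comp hp Computable.snd)
    (computablePred_eq (hcount.comp Computable.snd) Computable.fst)).of_eq ?_)
  rintro ⟨k, m⟩
  constructor
  · rintro ⟨hm, hk⟩
    exact hk ▸ Nat.nth_count hm
  · intro hkm
    simp only at hkm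
    exact hkm ▸ ⟨Nat.nth_mem_of_infinite hinf k, Nat.count_nth_of_infinite hinf k⟩

end Computable

section OfEncodableOfInfinite

variable (α : Type*) [inst : Encodable α] [Infinite α]

theorem infinite_range_encode : (Set.range (encode : α → ℕ)).Infinite :=
  Set.infinite_range_of_injective encode_injective

theorem nth_range_encode (k : ℕ) :
    Nat.nth (· ∈ Set.range (encode : α → ℕ)) k =
      inst.encode (@Denumerable.ofNat α (Denumerable.ofEncodableOfInfinite α) k) := by
  let := decidableRangeEncode α
  have := (infinite_range_encode α).to_subtype
  have hofNat : @Denumerable.ofNat α (Denumerable.ofEncodableOfInfinite α) k =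
      (equivRangeEncode α).symm (Nat.Subtype.ofNat (Set.range encode) k) := rfl
  have hencode (y : Set.range (encode : α → ℕ)) : encode ((equivRangeEncode α).symm y) = y :=
    congrArg Subtype.val ((equivRangeEncode α).apply_symm_apply y)
  rw [hofNat, hencode, ← Nat.Subtype.orderIsoOfNat_apply]
  exact Nat.nth_apply_eq_orderIsoOfNat (p := (· ∈ Set.range (encode : α → ℕ)))
    (infinite_range_encode α) k

theorem computable_encode_of_ofEncodableOfInfinite
    (h : ComputablePred (· ∈ Set.range (encode : α → ℕ))) :
    letI := @Primcodable.ofDenumerable α (Denumerable.ofEncodableOfInfinite α)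
    Computable inst.encode := by
  let hden := Denumerable.ofEncodableOfInfinite α
  refine ((computable_nth h (infinite_range_encode α)).comp
    (@Computable.encode α (@Primcodable.ofDenumerable α hden))).of_eq fun a => ?_
  rw [nth_range_encode, Denumerable.ofNat_encode]

end OfEncodableOfInfinite

section IntRat

theorem primrecRel_nat_coprime : PrimrecRel Nat.Coprime := by
  have hdvd : PrimrecRel fun k n : ℕ => n % k = 0 :=
    Primrec.eq.comp (Primrec.nat_mod.comp Primrec.snd Primrec.fst) (Primrec.const 0)
  have hcommon : PrimrecRel fun (k : ℕ) (p : ℕ × ℕ) =>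
      (p.1 % k = 0 ∧ p.2 % k = 0) ∧ k ≠ 1 :=
    ((hdvd.comp Primrec.fst (Primrec.fst.comp Primrec.snd)).and
      (hdvd.comp Primrec.fst (Primrec.snd.comp Primrec.snd))).and
      (Primrec.eq.comp Primrec.fst (Primrec.const 1)).not
  have hbound : Primrec fun p : ℕ × ℕ => p.1 + p.2 + 1 := Primrec.succ.comp Primrec.nat_add
  have hex : PrimrecPred fun p : ℕ × ℕ =>
      ∃ k ∈ List.range (p.1 + p.2 + 1), (p.1 % k = 0 ∧ p.2 % k = 0) ∧ k ≠ 1 :=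
    hcommon.exists_mem_list.comp (Primrec.list_range.comp hbound) Primrec.id
  refine hex.not.of_eq ?_
  rintro ⟨m, n⟩
  simp only [List.mem_range, ← Nat.dvd_iff_mod_eq_zero]
  constructor
  · intro h
    by_contra hgcd
    refine h ⟨m.gcd n, ?_, ⟨m.gcd_dvd_left n, m.gcd_dvd_right n⟩, hgcd⟩
    rcases m.eq_zero_or_pos with rfl | hm
    · simp
    · exact (Nat.gcd_le_left n hm).trans_lt (by omega)
  · rintro h ⟨k, -, ⟨hkm, hkn⟩, hk⟩
    exact hk (Nat.eq_one_of_dvd_coprimes h hkm hkn)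

theorem primrec_int_natAbs : Primrec Int.natAbs := by
  refine (Primrec.nat_div2.comp (Primrec.succ.comp Primrec.encode)).of_eq fun z => ?_
  rw [Nat.div2_val]
  cases z with
  | ofNat n =>
    change (2 * n + 1) / 2 = n
    omega
  | negSucc n =>
    change (2 * n + 1 + 1) / 2 = n + 1
    omega

theorem primrec_int_toNat : Primrec Int.toNat := by
  refine (Primrec.ite (Primrec.eq.comp (Primrec.nat_bodd.comp Primrec.encode)
    (Primrec.const false)) primrec_int_natAbs (Primrec.const 0)).of_eq fun z => ?_
  cases z with
  | ofNat n =>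
    have : (encode (Int.ofNat n)).bodd = false := by
      change (2 * n).bodd = false
      simp
    rw [if_pos this]
    rfl
  | negSucc n =>
    have : (encode (Int.negSucc n)).bodd = true := by
      change (2 * n + 1).bodd = true
      simp
    rw [if_neg (this ▸ Bool.true_eq_false.mp)]
    rfl

theorem primrec_int_toNat_neg : Primrec fun z : ℤ => (-z).toNat :=
  (Primrec.nat_sub.comp primrec_int_natAbs primrec_int_toNat).of_eq fun z => by omega

theorem rat_encode_eq (q : ℚ) :
    Rat.instEncodable.encode q = Nat.pair (encode q.num) q.den := rfl

theorem mem_range_rat_encode_iff (m : ℕ) :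
    m ∈ Set.range Rat.instEncodable.encode ↔
      0 < m.unpair.2 ∧ (Denumerable.ofNat ℤ m.unpair.1).natAbs.Coprime m.unpair.2 := by
  constructor
  · rintro ⟨q, rfl⟩
    rw [rat_encode_eq, Nat.unpair_pair, Denumerable.ofNat_encode]
    exact ⟨q.den_pos, q.reduced⟩
  · rintro ⟨hpos, hcop⟩
    refine ⟨⟨Denumerable.ofNat ℤ m.unpair.1, m.unpair.2, hpos.ne', hcop⟩, ?_⟩
    rw [rat_encode_eq, Denumerable.encode_ofNat, Nat.pair_unpair]

theorem computable_rat_encode : Computable Rat.instEncodable.encode := by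
  have hnum : Primrec fun m : ℕ => (Denumerable.ofNat ℤ m.unpair.1).natAbs :=
    primrec_int_natAbs.comp ((Primrec.ofNat ℤ).comp (Primrec.fst.comp Primrec.unpair))
  have hden : Primrec fun m : ℕ => m.unpair.2 := Primrec.snd.comp Primrec.unpair
  exact computable_encode_of_ofEncodableOfInfinite ℚ
    (((Primrec.nat_lt.comp (Primrec.const 0) hden).and
      (primrecRel_nat_coprime.comp hnum hden)).computablePred.of_eq
      fun m => (mem_range_rat_encode_iff m).symm)

theorem computable_rat_num : Computable Rat.num :=
  ((Computable.ofNat ℤ).comp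
    (Computable.fst.comp (Computable.unpair.comp computable_rat_encode))).of_eq fun q => by
      rw [rat_encode_eq, Nat.unpair_pair, Denumerable.ofNat_encode]

theorem computable_rat_den : Computable Rat.den :=
  (Computable.snd.comp (Computable.unpair.comp computable_rat_encode)).of_eq fun q => by
    rw [rat_encode_eq, Nat.unpair_pair]

theorem computable_rat_num_toNat : Computable fun q : ℚ => q.num.toNat :=
  primrec_int_toNat.to_comp.comp computable_rat_num

theorem computable_rat_num_neg_toNat : Computable fun q : ℚ => (-q.num).toNat :=
  primrec_int_toNat_neg.to_comp.comp computable_rat_num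

theorem rat_eq_toNat_sub_toNat_div_den (q : ℚ) :
    q = ((q.num.toNat : ℚ) - (-q.num).toNat) / q.den := by
  conv_lhs => rw [← Rat.num_div_den q, ← Int.toNat_sub_toNat_neg q.num]
  push_cast
  rfl

variable {α : Type*} [Primcodable α]

theorem computable_natCast_sub_div {a b d : α → ℕ} (ha : Computable a) (hb : Computable b)
    (hd : Computable d) (hd0 : ∀ x, d x ≠ 0) :
    Computable fun x => ((a x : ℚ) - b x) / d x := by
  have hx {f : α → ℕ} (hf : Computable f) : Computable fun p : α × ℚ => f p.1 :=
    hf.comp Computable.fst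
  have hq {f : ℚ → ℕ} (hf : Computable f) : Computable fun p : α × ℚ => f p.2 :=
    hf.comp Computable.snd
  refine computable_of_computablePred_graph ((computablePred_eq
    (computable_nat_add (computable_nat_mul (hx ha) (hq computable_rat_den))
      (computable_nat_mul (hq computable_rat_num_neg_toNat) (hx hd)))
    (computable_nat_add (computable_nat_mul (hq computable_rat_num_toNat) (hx hd))
      (computable_nat_mul (hx hb) (hq computable_rat_den)))).of_eq ?_)
  rintro ⟨x, q⟩
  have hdx : (d x : ℚ) ≠ 0 := Nat.cast_ne_zero.2 (hd0 x)
  have hqd : (q.den : ℚ) ≠ 0 := Nat.cast_ne_zero.2 q.den_ne_zero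
  conv_rhs => rw [rat_eq_toNat_sub_toNat_div_den q, div_eq_div_iff hdx hqd]
  rw [← Nat.cast_inj (R := ℚ)]
  push_cast
  constructor <;> intro h <;> linarith

theorem computable_rat_add : Computable₂ ((· + ·) : ℚ → ℚ → ℚ) := by
  have hfst {f : ℚ → ℕ} (hf : Computable f) : Computable fun p : ℚ × ℚ => f p.1 :=
    hf.comp Computable.fst
  have hsnd {f : ℚ → ℕ} (hf : Computable f) : Computable fun p : ℚ × ℚ => f p.2 :=
    hf.comp Computable.snd
  have hcross {f : ℚ → ℕ} (hf : Computable f) :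
      Computable fun p : ℚ × ℚ => f p.1 * p.2.den + f p.2 * p.1.den :=
    computable_nat_add (computable_nat_mul (hfst hf) (hsnd computable_rat_den))
      (computable_nat_mul (hsnd hf) (hfst computable_rat_den))
  refine (computable_natCast_sub_div (hcross computable_rat_num_toNat)
    (hcross computable_rat_num_neg_toNat)
    (computable_nat_mul (hfst computable_rat_den) (hsnd computable_rat_den))
    fun p => mul_ne_zero p.1.den_ne_zero p.2.den_ne_zero).of_eq ?_
  rintro ⟨p, q⟩
  have hp : (p.den : ℚ) ≠ 0 := Nat.cast_ne_zero.2 p.den_ne_zero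
  have hq : (q.den : ℚ) ≠ 0 := Nat.cast_ne_zero.2 q.den_ne_zero
  change _ = p + q
  conv_rhs => rw [rat_eq_toNat_sub_toNat_div_den p, rat_eq_toNat_sub_toNat_div_den q,
    div_add_div _ _ hp hq]
  push_cast
  ring

theorem computablePred_rat_lt {f g : α → ℚ} (hf : Computable f) (hg : Computable g) :
    ComputablePred fun x => f x < g x := by
  have hcross {u v : α → ℚ} (hu : Computable u) (hv : Computable v) :
      Computable fun x => (u x).num.toNat * (v x).den + (-(v x).num).toNat * (u x).den :=
    computable_nat_add
      (computable_nat_mul (computable_rat_num_toNat.comp hu) (computable_rat_den.comp hv))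
      (computable_nat_mul (computable_rat_num_neg_toNat.comp hv) (computable_rat_den.comp hu))
  refine (computablePred_nat_lt (hcross hf hg) (hcross hg hf)).of_eq fun x => ?_
  have hfd : (0 : ℚ) < (f x).den := Nat.cast_pos.2 (f x).den_pos
  have hgd : (0 : ℚ) < (g x).den := Nat.cast_pos.2 (g x).den_pos
  conv_rhs => rw [rat_eq_toNat_sub_toNat_div_den (f x), rat_eq_toNat_sub_toNat_div_den (g x),
    div_lt_div_iff₀ hfd hgd]
  rw [← Nat.cast_lt (α := ℚ)]
  push_cast
  constructor <;> intro h <;> linarith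

theorem computablePred_abs_rat_sub_lt {f g ε : α → ℚ} (hf : Computable f) (hg : Computable g)
    (hε : Computable ε) : ComputablePred fun x => |f x - g x| < ε x :=
  (computablePred_and
    (computablePred_rat_lt hf (computable_rat_add.comp hε hg))
    (computablePred_rat_lt hg (computable_rat_add.comp hε hf))).of_eq fun x => by
      rw [abs_sub_lt_iff, sub_lt_iff_lt_add, sub_lt_iff_lt_add]

theorem computable_two_zpow_neg : Computable fun n : ℕ => (2 : ℚ) ^ (-(n : ℤ)) := by
  have hpow : Primrec₂ ((· ^ ·) : ℕ → ℕ → ℕ) := Primrec₂.unpaired'.1 Nat.Primrec.pow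
  refine (computable_natCast_sub_div (Computable.const 1) (Computable.const 0)
    (hpow.comp (Primrec.const 2) Primrec.id).to_comp fun n => by simp).of_eq fun n => ?_
  simp

end IntRat

theorem two_zpow_neg_eq_add_self {K : Type*} [Field K] [CharZero K] (n : ℕ) :
    (2 : K) ^ (-(n : ℤ)) = 2 ^ (-((n + 1 : ℕ) : ℤ)) + 2 ^ (-((n + 1 : ℕ) : ℤ)) := by
  rw [← two_mul, ← zpow_one_add₀ two_ne_zero]
  push_cast
  ring_nf

theorem IsComputableReal.exists_computable_index {x : ℝ} (hx : IsComputableReal x) {r : ℕ → ℚ}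
    (hr : Computable r) (hlim : Tendsto (fun s => (r s : ℝ)) atTop (𝓝 x)) :
    ∃ f : ℕ → ℕ, Computable f ∧ ∀ n : ℕ, |x - r (f n)| < 2 ^ (-(n : ℤ)) := by
  classical
  obtain ⟨q, hq, hqx⟩ := hx
  let P (n s : ℕ) : Prop := |q (n + 2) - r s| < 2 ^ (-((n + 1 : ℕ) : ℤ))
  have hP_iff (n s : ℕ) : P n s ↔ |(q (n + 2) : ℝ) - r s| < 2 ^ (-((n + 1 : ℕ) : ℤ)) := by
    change |q (n + 2) - r s| < 2 ^ (-((n + 1 : ℕ) : ℤ)) ↔ _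
    rw [← Rat.cast_lt (K := ℝ)]
    push_cast
    rfl
  have hP : ComputablePred fun p : ℕ × ℕ => P p.1 p.2 := by
    have hsucc : Computable fun p : ℕ × ℕ => p.1 + 1 := Computable.succ.comp Computable.fst
    exact computablePred_abs_rat_sub_lt (hq.comp (Computable.succ.comp hsucc))
      (hr.comp Computable.snd) (computable_two_zpow_neg.comp hsucc)
  have hex (n : ℕ) : ∃ s, P n s := by
    obtain ⟨s, hs⟩ := (hlim.eventually
      (Metric.ball_mem_nhds x (ε := 2 ^ (-((n + 2 : ℕ) : ℤ))) (by positivity))).exists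
    rw [dist_comm, Real.dist_eq] at hs
    refine ⟨s, (hP_iff n s).2 ?_⟩
    calc |(q (n + 2) : ℝ) - r s| ≤ |(q (n + 2) : ℝ) - x| + |x - r s| := abs_sub_le _ _ _
      _ < 2 ^ (-((n + 2 : ℕ) : ℤ)) + 2 ^ (-((n + 2 : ℕ) : ℤ)) :=
        add_lt_add_of_le_of_lt (abs_sub_comm x _ ▸ hqx (n + 2)) hs
      _ = 2 ^ (-((n + 1 : ℕ) : ℤ)) := (two_zpow_neg_eq_add_self (n + 1)).symm
  refine ⟨fun n => Nat.find (hex n), Computable.find hP hex, fun n => ?_⟩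
  calc |x - r (Nat.find (hex n))|
      ≤ |x - q (n + 2)| + |(q (n + 2) : ℝ) - r (Nat.find (hex n))| := abs_sub_le _ _ _
    _ < 2 ^ (-((n + 1 : ℕ) : ℤ)) + 2 ^ (-((n + 1 : ℕ) : ℤ)) :=
      add_lt_add_of_le_of_lt
        ((hqx (n + 2)).trans (zpow_le_zpow_right₀ one_le_two (by omega)))
        ((hP_iff n _).1 (Nat.find_spec (hex n)))
    _ = 2 ^ (-(n : ℤ)) := (two_zpow_neg_eq_add_self n).symm

theorem IsComputableReal.exists_computable_forall_lt_of_tsum {r : ℕ → ℚ} (hr : Computable r)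
    (hr0 : ∀ i, 0 ≤ r i) (hsum : Summable fun i => (r i : ℝ))
    (hx : IsComputableReal (∑' i, (r i : ℝ))) :
    ∃ f : ℕ → ℕ, Computable f ∧ ∀ n i : ℕ, f n ≤ i → (r i : ℝ) < 2 ^ (-(n : ℤ)) := by
  have hpartial : Computable fun s => ∑ i ∈ Finset.range s, r i :=
    computable_sum_range computable_rat_add (hr.comp Computable.snd).to₂ Computable.id
  obtain ⟨f, hf, hclose⟩ := hx.exists_computable_index hpartial <| by
    simpa only [Rat.cast_sum] using hsum.hasSum.tendsto_sum_nat
  refine ⟨f, hf, fun n i hi => ?_⟩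
  have hle : (r i : ℝ) + ∑ j ∈ Finset.range (f n), (r j : ℝ) ≤ ∑' j, (r j : ℝ) := by
    have hi' : i ∉ Finset.range (f n) := by simpa only [Finset.mem_range, not_lt] using hi
    rw [← Finset.sum_insert (f := fun j => (r j : ℝ)) hi']
    exact hsum.sum_le_tsum _ fun j _ => Rat.cast_nonneg.2 (hr0 j)
  have hlt := (le_abs_self _).trans_lt (hclose n)
  rw [Rat.cast_sum] at hlt
  linarith

theorem summable_two_zpow_neg_of_injective {ι : Type*} {φ : ι → ℕ} (hφ : Function.Injective φ) :
    Summable fun i => (2 : ℝ) ^ (-(φ i : ℤ)) :=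
  (summable_geometric_two.comp_injective hφ).congr fun i => by simp

theorem stmt0_general (φ : ℕ → ℕ) (hsum : Summable fun ℓ => (2 : ℝ) ^ (-(φ ℓ : ℤ)))
    (hcomp : Computable φ) (hrange : ¬ ComputablePred (fun n => n ∈ Set.range φ)) :
    ¬ IsComputableReal (∑' ℓ : ℕ, (2 : ℝ) ^ (-(φ ℓ : ℤ))) := by
  intro hx
  have hcast (ℓ : ℕ) : (2 : ℝ) ^ (-(φ ℓ : ℤ)) = ((2 ^ (-(φ ℓ : ℤ)) : ℚ) : ℝ) := by push_cast; rfl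
  simp only [hcast] at hsum hx
  obtain ⟨f, hf, hsmall⟩ := IsComputableReal.exists_computable_forall_lt_of_tsum
    (computable_two_zpow_neg.comp hcomp) (fun ℓ => by positivity) hsum hx
  have hbound : ∀ ℓ, ℓ < f (φ ℓ) := by
    intro ℓ
    by_contra! hle
    exact (hsmall (φ ℓ) ℓ hle).ne (hcast ℓ).symm
  have hdec : ComputablePred fun p : ℕ × ℕ => φ p.2 = p.1 :=
    computablePred_eq (hcomp.comp Computable.snd) Computable.fst
  refine hrange ((computablePred_exists_lt (p := fun n ℓ => φ ℓ = n) hdec hf).of_eq fun n => ?_)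
  constructor
  · rintro ⟨ℓ, -, hℓ⟩
    exact ⟨ℓ, hℓ⟩
  · rintro ⟨ℓ, rfl⟩
    exact ⟨ℓ, hbound ℓ, rfl⟩

/-- If `φ : ℕ → ℕ` is an injective computable function whose range is not a
computable (decidable) subset of `ℕ`, then `∑ ℓ, 2^(-φ ℓ)` is not a computable real. -/
theorem stmt0 (φ : ℕ → ℕ) (hinj : Function.Injective φ) (hcomp : Computable φ)
    (hrange : ¬ ComputablePred (fun n => n ∈ Set.range φ)) :
    ¬ IsComputableReal (∑' ℓ : ℕ, (2 : ℝ) ^ (-(φ ℓ : ℤ))) :=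
  stmt0_general φ (summable_two_zpow_neg_of_injective hinj) hcomp hrange
end

section
/- Let g : ℝ → ℝ be the trapezoid function, let w_n ≥ 0 for n ≥ 1 with Σ_{n=1}^∞ w_n = 1, and let u_n ≥ 0 for n ≥ 1. Define f : ℝ → ℝ by f(α) = Σ_{n=1}^∞ w_n · g(|α| − u_n). Then f is well defined, nonnegative, even, vanishes on [−1,1], is integrable on ℝ, and ∫_ℝ f(α) dα = 1. -/
open Filter MeasureTheory

/-- The trapezoid function `g`: it vanishes outside `[1,4]`, rises linearly from `0`
to `1/4` on `[1,2]`, equals `1/4` on `[2,3]`, and falls linearly back to `0` on `[3,4]`.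
Note `∫ g = 1/2`. -/
noncomputable def trap (α : ℝ) : ℝ :=
  if α < 1 then 0
  else if α ≤ 2 then (α - 1) / 4
  else if α < 3 then 1 / 4
  else if α ≤ 4 then (4 - α) / 4
  else 0

/-!
The integer translates of `trap` add up to the constant `1 / 2`, so folding `[1, 4]` onto `[1, 2]`
gives `∫ trap = 1 / 2`. For `0 ≤ c` the two bumps of `α ↦ trap (|α| - c)` are disjoint copies of
`trap`, hence this function is a probability density. Thus `f` is a convex combination of
probability densities, and integrating termwise gives `∫ f = 1`.
-/

theorem integral_comp_abs_sub {g : ℝ → ℝ} {c : ℝ} (hg : ∀ x ≤ -c, g x = 0) :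
    ∫ x, g (|x| - c) = 2 * ∫ x, g x := by
  have hsupp : ∀ x ∉ Set.Ioi (0 : ℝ), g (x - c) = 0 := fun x hx ↦
    hg _ (by linarith [Set.notMem_Ioi.mp hx])
  rw [integral_comp_abs (f := fun x ↦ g (x - c)),
    setIntegral_eq_integral_of_forall_compl_eq_zero hsupp, integral_sub_right_eq_self g c]

theorem integral_tsum_mul_of_integral_eq_one {ι X : Type*} [Countable ι] [MeasurableSpace X]
    {μ : Measure X} {w : ι → ℝ} {p : ι → X → ℝ} (hw : Summable w)
    (hp_nonneg : ∀ i, 0 ≤ᵐ[μ] p i) (hp_integral : ∀ i, ∫ x, p i x ∂μ = 1) :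
    ∫ x, ∑' i, w i * p i x ∂μ = ∑' i, w i := by
  have hp_integrable (i : ι) : Integrable (p i) μ :=
    .of_integral_ne_zero (by rw [hp_integral i]; exact one_ne_zero)
  have hnorm (i : ι) : ∫ x, ‖w i * p i x‖ ∂μ = |w i| := by
    have hp_norm : (fun x ↦ ‖p i x‖) =ᵐ[μ] p i :=
      (hp_nonneg i).mono fun _ hx ↦ Real.norm_of_nonneg hx
    simp only [norm_mul, integral_const_mul]
    rw [integral_congr_ae hp_norm, hp_integral, mul_one, Real.norm_eq_abs]
  rw [← integral_tsum_of_summable_integral_norm (fun i ↦ (hp_integrable i).const_mul (w i))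
    (by simpa only [hnorm] using hw.abs)]
  simp only [integral_const_mul, hp_integral, mul_one]

theorem trap_eq_max_min (x : ℝ) :
    trap x = max 0 (min (1 / 4) (min ((x - 1) / 4) ((4 - x) / 4))) := by
  unfold trap
  simp only [max_def, min_def]
  split_ifs <;> linarith

theorem trap_nonneg (x : ℝ) : 0 ≤ trap x :=
  (le_max_left _ _).trans_eq (trap_eq_max_min x).symm

theorem trap_le_one_quarter (x : ℝ) : trap x ≤ 1 / 4 :=
  (trap_eq_max_min x).trans_le (max_le (by norm_num) (min_le_left _ _))

@[fun_prop]
theorem continuous_trap : Continuous trap := by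
  rw [funext trap_eq_max_min]
  fun_prop

theorem trap_of_le_one {x : ℝ} (hx : x ≤ 1) : trap x = 0 := by
  unfold trap
  grind

theorem support_trap_subset : Function.support trap ⊆ Set.Ioc 1 4 := by
  intro x hx
  rw [Function.mem_support] at hx
  unfold trap at hx
  grind

theorem trap_add_trap_add_one_add_trap_add_two {x : ℝ} (hx : x ∈ Set.Icc 1 2) :
    trap x + trap (x + 1) + trap (x + 2) = 1 / 2 := by
  unfold trap
  grind

theorem integral_trap : ∫ x, trap x = 1 / 2 := by
  have hi (a b : ℝ) : IntervalIntegrable trap volume a b := continuous_trap.intervalIntegrable a b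
  calc ∫ x, trap x
      = ∫ x in (1 : ℝ)..4, trap x :=
        (intervalIntegral.integral_eq_integral_of_support_subset support_trap_subset).symm
    _ = (∫ x in (1 : ℝ)..2, trap x) + (∫ x in (2 : ℝ)..3, trap x) + ∫ x in (3 : ℝ)..4, trap x := by
        rw [intervalIntegral.integral_add_adjacent_intervals (hi 1 2) (hi 2 3),
          intervalIntegral.integral_add_adjacent_intervals (hi 1 3) (hi 3 4)]
    _ = (∫ x in (1 : ℝ)..2, trap x) + (∫ x in (1 : ℝ)..2, trap (x + 1)) +
          ∫ x in (1 : ℝ)..2, trap (x + 2) := by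
        simp only [intervalIntegral.integral_comp_add_right]
        norm_num
    _ = ∫ x in (1 : ℝ)..2, (trap x + trap (x + 1) + trap (x + 2)) := by
        rw [intervalIntegral.integral_add, intervalIntegral.integral_add] <;>
          exact Continuous.intervalIntegrable (by fun_prop) _ _
    _ = ∫ _ in (1 : ℝ)..2, 1 / 2 :=
        intervalIntegral.integral_congr fun x hx ↦
          trap_add_trap_add_one_add_trap_add_two (Set.uIcc_of_le (one_le_two (α := ℝ)) ▸ hx)
    _ = 1 / 2 := by norm_num

theorem integral_trap_abs_sub {c : ℝ} (hc : 0 ≤ c) : ∫ x : ℝ, trap (|x| - c) = 1 := by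
  rw [integral_comp_abs_sub (g := trap) fun x hx ↦ trap_of_le_one (by linarith), integral_trap]
  norm_num

/-- If `wₙ ≥ 0` with `Σ_{n≥1} wₙ = 1` and `uₙ ≥ 0`, then
`f(α) = Σ_{n≥1} wₙ g(|α| - uₙ)` is a well-defined, nonnegative, even density
vanishing on `[-1,1]`, integrable, with `∫ f = 1`. -/
theorem stmt9 (w u : ℕ → ℝ) (hw : ∀ n : ℕ, 1 ≤ n → 0 ≤ w n)
    (hsum : HasSum (fun n : ℕ => w (n + 1)) 1)
    (hu : ∀ n : ℕ, 1 ≤ n → 0 ≤ u n)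
    (f : ℝ → ℝ) (hf : ∀ α, f α = ∑' n : ℕ, w (n + 1) * trap (|α| - u (n + 1))) :
    (∀ α : ℝ, Summable (fun n : ℕ => w (n + 1) * trap (|α| - u (n + 1)))) ∧
    (∀ α, 0 ≤ f α) ∧
    (∀ α, f (-α) = f α) ∧
    (∀ α, |α| ≤ 1 → f α = 0) ∧
    Integrable f ∧
    (∫ α, f α) = 1 := by
  have hw' (n : ℕ) : 0 ≤ w (n + 1) := hw _ n.succ_pos
  have hu' (n : ℕ) : 0 ≤ u (n + 1) := hu _ n.succ_pos
  have hterm_nonneg (α : ℝ) (n : ℕ) : 0 ≤ w (n + 1) * trap (|α| - u (n + 1)) :=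
    mul_nonneg (hw' n) (trap_nonneg _)
  have hintegral : ∫ α, f α = 1 := by
    rw [funext hf, integral_tsum_mul_of_integral_eq_one hsum.summable
      (fun n ↦ ae_of_all _ fun _ ↦ trap_nonneg _) (fun n ↦ integral_trap_abs_sub (hu' n)),
      hsum.tsum_eq]
  refine ⟨fun α ↦ ?summable, fun α ↦ ?nonneg, fun α ↦ ?even, fun α hα ↦ ?vanishing,
    .of_integral_ne_zero (hintegral ▸ one_ne_zero), hintegral⟩
  case summable =>
    exact .of_nonneg_of_le (hterm_nonneg α)
      (fun n ↦ mul_le_mul_of_nonneg_left (trap_le_one_quarter _) (hw' n))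
      (hsum.summable.mul_right (1 / 4))
  case nonneg => exact hf α ▸ tsum_nonneg (hterm_nonneg α)
  case even => rw [hf, hf, abs_neg]
  case vanishing =>
    have hterm (n : ℕ) : trap (|α| - u (n + 1)) = 0 := trap_of_le_one (by linarith [hu' n])
    simp only [hf, hterm, mul_zero, tsum_zero]
end

section
/- Let φ : ℕ → ℕ be injective. For each integer M ≥ 4 let K_M = ∫₀^∞ g_M(α) ln α dα, define g*(α) = Σ_{M=4}^∞ 2^(−φ(M)) · g_M(α)/K_M, let c₂ = ∫₀^∞ g*(α) dα, and define f*(α) = g*(|α|)/(2c₂). Then f* is a continuous, even, nonnegative integrable function vanishing on [−1,1] with ∫_ℝ f*(α) dα = 1, moreover ∫₀^∞ g*(α) ln α dα = Σ_{M=4}^∞ 2^(−φ(M)), and ∫_ℝ ln(α²) f*(α) dα = (2/c₂) · Σ_{M=4}^∞ 2^(−φ(M)). -/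
open Filter MeasureTheory

/-- For `M ≥ 4`, the function `g_M` from Lemma 1 of the paper. -/
noncomputable def gM (M : ℕ) (α : ℝ) : ℝ :=
  if α ≤ 2 then 0
  else if α ≤ 3 then (α - 2) / (3 * (Real.log 3) ^ 2)
  else if α ≤ M then 1 / (α * (Real.log α) ^ 2)
  else if α ≤ M + 1 then ((M : ℝ) + 1 - α) / (M * (Real.log M) ^ 2)
  else 0

/-- `K_M = ∫₀^∞ g_M(α) ln α dα`. -/
noncomputable def Kconst (M : ℕ) : ℝ :=
  ∫ α in Set.Ioi (0 : ℝ), gM M α * Real.log α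

/-!
Each `g_M / K_M` has logarithmic moment `1`, so integrating the series of `g*` term by term yields
`∫₀^∞ g* ln = ∑ 2^(-φ(M))`. The bound `K_M ≥ ln (ln M / ln 3)` keeps the `K_M` away from `0`, so the
series converges uniformly and `g*` is continuous. Since `g*` vanishes below `2`, where `ln` is not
yet bounded away from `0`, the finite logarithmic moment makes `g*` integrable; since that moment is
nonzero, `c₂ > 0`. The claims about `f*` follow by reflection and `ln (α²) = 2 ln |α|`.
-/

section Mixture

variable {X ι : Type*} [MeasurableSpace X] {μ : Measure X}

lemma integral_tsum_mul_div_integral [Countable ι] {h : ι → X → ℝ} {a : ι → ℝ}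
    (h_nonneg : ∀ i, 0 ≤ᵐ[μ] h i) (h_ne : ∀ i, ∫ x, h i x ∂μ ≠ 0) (ha : Summable a) :
    ∫ x, ∑' i, a i * h i x / ∫ y, h i y ∂μ ∂μ = ∑' i, a i := by
  have term_integral (i : ι) : ∫ x, a i * h i x / ∫ y, h i y ∂μ ∂μ = a i := by
    rw [integral_div, integral_const_mul, mul_div_cancel_right₀ _ (h_ne i)]
  have term_norm_integral (i : ι) : ∫ x, ‖a i * h i x / ∫ y, h i y ∂μ‖ ∂μ = |a i| := by
    have norm_h : ∫ x, ‖h i x‖ ∂μ = ∫ x, h i x ∂μ :=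
      integral_congr_ae ((h_nonneg i).mono fun _ hx ↦ Real.norm_of_nonneg hx)
    simp only [norm_div, norm_mul]
    rw [integral_div, integral_const_mul, norm_h,
      Real.norm_of_nonneg (integral_nonneg_of_ae (h_nonneg i)), mul_div_cancel_right₀ _ (h_ne i),
      Real.norm_eq_abs]
  have term_integrable (i : ι) : Integrable (fun x ↦ a i * h i x / ∫ y, h i y ∂μ) μ :=
    ((Integrable.of_integral_ne_zero (h_ne i)).const_mul _).div_const _
  rw [← integral_tsum_of_summable_integral_norm term_integrable
    (by simpa only [term_norm_integral] using ha.abs)]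
  exact tsum_congr term_integral

lemma integral_pos_of_integral_mul_ne_zero {g w : X → ℝ} (hg_nonneg : 0 ≤ᵐ[μ] g)
    (hg : Integrable g μ) (hgw : ∫ x, g x * w x ∂μ ≠ 0) : 0 < ∫ x, g x ∂μ := by
  refine (integral_nonneg_of_ae hg_nonneg).lt_of_ne' fun h_zero ↦ hgw ?_
  have hg_zero : g =ᵐ[μ] 0 := (integral_eq_zero_iff_of_nonneg_ae hg_nonneg hg).1 h_zero
  exact integral_eq_zero_of_ae (hg_zero.mono fun x hx ↦ by simp [hx])

end Mixture

lemma integrable_of_integrable_mul_log {μ : Measure ℝ} {g : ℝ → ℝ} {r : ℝ} (hr : 1 < r)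
    (hg : AEStronglyMeasurable g μ) (hg_zero : ∀ x ≤ r, g x = 0)
    (hg_log : Integrable (fun x ↦ g x * Real.log x) μ) : Integrable g μ := by
  refine (hg_log.div_const (Real.log r)).mono hg (.of_forall fun x ↦ ?_)
  rcases le_or_gt x r with hx | hx
  · simp [hg_zero x hx]
  · have log_r_pos : 0 < Real.log r := Real.log_pos hr
    have log_le : Real.log r ≤ Real.log x := Real.log_le_log (by linarith) hx.le
    rw [norm_div, norm_mul, Real.norm_of_nonneg log_r_pos.le,
      Real.norm_of_nonneg (log_r_pos.le.trans log_le), le_div_iff₀ log_r_pos]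
    gcongr

section EvenDensity

/-- The even extension of `g` from `(0, ∞)` to the line, normalized to have total mass `1`; with
`g = g*` it is the paper's `f*`. -/
noncomputable def evenDensity (g : ℝ → ℝ) (x : ℝ) : ℝ :=
  g |x| / (2 * ∫ t in Set.Ioi (0 : ℝ), g t)

variable {g : ℝ → ℝ}

lemma evenDensity_neg (g : ℝ → ℝ) (x : ℝ) : evenDensity g (-x) = evenDensity g x := by
  simp only [evenDensity, abs_neg]

lemma continuous_evenDensity (hg : Continuous g) : Continuous (evenDensity g) :=
  (hg.comp continuous_abs).div_const _

lemma evenDensity_nonneg (hg : ∀ x, 0 ≤ g x) (x : ℝ) : 0 ≤ evenDensity g x :=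
  div_nonneg (hg _) (mul_nonneg zero_le_two (integral_nonneg hg))

lemma evenDensity_eq_zero {r x : ℝ} (hg : ∀ y ≤ r, g y = 0) (hx : |x| ≤ r) :
    evenDensity g x = 0 := by
  rw [evenDensity, hg _ hx, zero_div]

lemma integral_evenDensity (hg : ∫ x in Set.Ioi (0 : ℝ), g x ≠ 0) :
    ∫ x, evenDensity g x = 1 := by
  simp only [evenDensity]
  rw [integral_div, integral_comp_abs (f := g)]
  exact div_self (mul_ne_zero two_ne_zero hg)

lemma integrable_evenDensity (hg : ∫ x in Set.Ioi (0 : ℝ), g x ≠ 0) :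
    Integrable (evenDensity g) :=
  .of_integral_ne_zero (by rw [integral_evenDensity hg]; exact one_ne_zero)

lemma integral_log_sq_mul_evenDensity (g : ℝ → ℝ) :
    ∫ x, Real.log (x ^ 2) * evenDensity g x =
      2 / (∫ x in Set.Ioi (0 : ℝ), g x) * ∫ x in Set.Ioi (0 : ℝ), g x * Real.log x := by
  set c := ∫ x in Set.Ioi (0 : ℝ), g x with hc
  have log_sq_mul (x : ℝ) :
      Real.log (x ^ 2) * evenDensity g x = (fun y ↦ c⁻¹ * (g y * Real.log y)) |x| := by
    simp only [evenDensity, Real.log_pow, Real.log_abs, ← hc, Nat.cast_ofNat]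
    ring
  simp only [log_sq_mul]
  rw [integral_comp_abs (f := fun y ↦ c⁻¹ * (g y * Real.log y)), integral_const_mul]
  ring

end EvenDensity

section Kernel

variable {M : ℕ} {α : ℝ}

lemma one_le_log_of_three_le {x : ℝ} (hx : 3 ≤ x) : 1 ≤ Real.log x :=
  (Real.le_log_iff_exp_le (by linarith)).2 (Real.exp_one_lt_three.le.trans hx)

lemma gM_of_le_two (M : ℕ) (hα : α ≤ 2) : gM M α = 0 :=
  if_pos hα

lemma gM_of_add_one_lt (hM : 2 ≤ M) (hα : (M : ℝ) + 1 < α) : gM M α = 0 := by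
  have hM' : (2 : ℝ) ≤ M := mod_cast hM
  simp only [gM]
  rw [if_neg (by linarith), if_neg (by linarith), if_neg (by linarith), if_neg (by linarith)]

lemma gM_mul_log_of_mem_Ioc (hα : α ∈ Set.Ioc (3 : ℝ) M) :
    gM M α * Real.log α = α⁻¹ / Real.log α := by
  obtain ⟨hα₃, hαM⟩ := hα
  have log_pos : 0 < Real.log α := Real.log_pos (by linarith)
  simp only [gM]
  rw [if_neg (by linarith), if_neg (by linarith), if_pos hαM]
  field_simp

lemma gM_nonneg (M : ℕ) (α : ℝ) : 0 ≤ gM M α := by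
  unfold gM
  split_ifs with h₂ h₃ hM hM₁
  · exact le_rfl
  · exact div_nonneg (by linarith) (by positivity)
  · exact one_div_nonneg.2 (mul_nonneg (by linarith) (sq_nonneg _))
  · exact div_nonneg (by linarith) (by positivity)
  · exact le_rfl

lemma gM_le_one (M : ℕ) (α : ℝ) : gM M α ≤ 1 := by
  have one_le_denom {x : ℝ} (hx : 3 ≤ x) : 1 ≤ x * Real.log x ^ 2 :=
    one_le_mul_of_one_le_of_one_le (by linarith) (one_le_pow₀ (one_le_log_of_three_le hx))
  unfold gM
  split_ifs with h₂ h₃ hM hM₁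
  · exact zero_le_one
  · exact div_le_one_of_le₀ (by linarith [one_le_denom le_rfl]) (by positivity)
  · have one_le := one_le_denom (not_le.1 h₃).le
    exact div_le_one_of_le₀ one_le (by linarith)
  · have three_le : (3 : ℝ) ≤ M := by
      have : 2 < M := by exact_mod_cast (by linarith : (2 : ℝ) < M)
      exact_mod_cast this
    exact div_le_one_of_le₀ (by linarith [one_le_denom three_le]) (by positivity)
  · exact zero_le_one

lemma continuous_one_div_mul_log_sq_max_three :
    Continuous fun x : ℝ ↦ 1 / (max 3 x * Real.log (max 3 x) ^ 2) := by
  have three_le (x : ℝ) : 3 ≤ max 3 x := le_max_left _ _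
  have continuous_log : Continuous fun x : ℝ ↦ Real.log (max 3 x) :=
    Continuous.log (by fun_prop) fun x ↦ by linarith [three_le x]
  refine continuous_const.div (by fun_prop) fun x ↦ mul_ne_zero ?_ (pow_ne_zero 2 ?_)
  · linarith [three_le x]
  · linarith [one_le_log_of_three_le (three_le x)]

lemma continuous_gM (hM : 3 ≤ M) : Continuous (gM M) := by
  have hM' : (3 : ℝ) ≤ M := mod_cast hM
  -- Clamping the argument at `3` makes the third branch continuous on the whole line.
  have gM_eq : gM M = fun α ↦
      if α ≤ 2 then 0
      else if α ≤ 3 then (α - 2) / (3 * Real.log 3 ^ 2)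
      else if α ≤ M then 1 / (max 3 α * Real.log (max 3 α) ^ 2)
      else if α ≤ M + 1 then (M + 1 - α) / (M * Real.log M ^ 2)
      else 0 := by
    funext α
    unfold gM
    split_ifs with h₂ h₃
    all_goals first | rfl | rw [max_eq_right (not_le.1 h₃).le]
  rw [gM_eq]
  refine continuous_const.if_le (.if_le (by fun_prop)
    (continuous_one_div_mul_log_sq_max_three.if_le (.if_le (by fun_prop) continuous_const
      continuous_id continuous_const ?agree_at_M_add_one)
      continuous_id continuous_const ?agree_at_M)
    continuous_id continuous_const ?agree_at_three)
    continuous_id continuous_const ?agree_at_two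
  case agree_at_two =>
    rintro x rfl
    norm_num
  case agree_at_three =>
    rintro x rfl
    rw [if_pos hM']
    norm_num
  case agree_at_M =>
    rintro x rfl
    simp [max_eq_right hM']
  case agree_at_M_add_one =>
    rintro x rfl
    simp

lemma gM_mul_log_nonneg (M : ℕ) (α : ℝ) : 0 ≤ gM M α * Real.log α := by
  rcases le_or_gt α 2 with hα | hα
  · simp [gM_of_le_two M hα]
  · exact mul_nonneg (gM_nonneg M α) (Real.log_nonneg (by linarith))

lemma integrable_gM_mul_log (hM : 3 ≤ M) : Integrable fun α ↦ gM M α * Real.log α := by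
  have support_subset :
      (Function.support fun α ↦ gM M α * Real.log α) ⊆ Set.Icc 2 ((M : ℝ) + 1) := by
    intro α hα
    have gM_ne : gM M α ≠ 0 := left_ne_zero_of_mul hα
    constructor <;> by_contra! h
    · exact gM_ne (gM_of_le_two M h.le)
    · exact gM_ne (gM_of_add_one_lt (by lia) h)
  rw [← integrableOn_iff_integrable_of_support_subset support_subset]
  refine ContinuousOn.integrableOn_Icc ((continuous_gM hM).continuousOn.mul ?_)
  exact Real.continuousOn_log.mono fun x hx ↦ by
    simp only [Set.mem_compl_iff, Set.mem_singleton_iff]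
    linarith [hx.1]

lemma log_log_div_log_three_le_Kconst (hM : 3 ≤ M) :
    Real.log (Real.log M / Real.log 3) ≤ Kconst M := by
  have hM' : (3 : ℝ) ≤ M := mod_cast hM
  calc Real.log (Real.log M / Real.log 3)
      = ∫ α in (3 : ℝ)..M, α⁻¹ / Real.log α := by
        rw [integral_inv_div_log (by norm_num) (by linarith), Real.log_div]
        · exact (Real.log_pos (by linarith)).ne'
        · exact (Real.log_pos (by norm_num)).ne'
    _ = ∫ α in Set.Ioc (3 : ℝ) M, gM M α * Real.log α := by
        rw [intervalIntegral.integral_of_le hM']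
        exact setIntegral_congr_fun measurableSet_Ioc fun α hα ↦ (gM_mul_log_of_mem_Ioc hα).symm
    _ ≤ Kconst M :=
        setIntegral_mono_set (integrable_gM_mul_log hM).integrableOn
          (.of_forall (gM_mul_log_nonneg M))
          (Set.Ioc_subset_Ioi_self.trans (Set.Ioi_subset_Ioi (by norm_num))).eventuallyLE

lemma log_log_four_div_log_three_pos : 0 < Real.log (Real.log 4 / Real.log 3) := by
  have log_three_pos : 0 < Real.log 3 := Real.log_pos (by norm_num)
  exact Real.log_pos ((one_lt_div log_three_pos).2 (Real.log_lt_log (by norm_num) (by norm_num)))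

lemma log_log_four_div_log_three_le_Kconst (hM : 4 ≤ M) :
    Real.log (Real.log 4 / Real.log 3) ≤ Kconst M := by
  have hM' : (4 : ℝ) ≤ M := mod_cast hM
  refine le_trans ?_ (log_log_div_log_three_le_Kconst (by lia))
  gcongr

lemma Kconst_pos (hM : 4 ≤ M) : 0 < Kconst M :=
  log_log_four_div_log_three_pos.trans_le (log_log_four_div_log_three_le_Kconst hM)

lemma gM_div_Kconst_le (hM : 4 ≤ M) (α : ℝ) :
    gM M α / Kconst M ≤ 1 / Real.log (Real.log 4 / Real.log 3) :=
  div_le_div₀ zero_le_one (gM_le_one M α) log_log_four_div_log_three_pos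
    (log_log_four_div_log_three_le_Kconst hM)

end Kernel

section GStar

/-- The paper's `g*` for an arbitrary weight sequence `a`, where `a k` is the weight of `g_M / K_M`
for `M = k + 4`; the paper takes `a k = 2 ^ (-φ (k + 4))`. -/
noncomputable def gStar (a : ℕ → ℝ) (α : ℝ) : ℝ :=
  ∑' k, a k * gM (k + 4) α / Kconst (k + 4)

variable {a : ℕ → ℝ}

lemma gStar_of_le_two (a : ℕ → ℝ) {α : ℝ} (hα : α ≤ 2) : gStar a α = 0 := by
  simp [gStar, gM_of_le_two _ hα]

lemma gStar_nonneg (ha : ∀ k, 0 ≤ a k) (α : ℝ) : 0 ≤ gStar a α :=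
  tsum_nonneg fun k ↦ div_nonneg (mul_nonneg (ha k) (gM_nonneg _ α)) (Kconst_pos (by lia)).le

lemma continuous_gStar (ha : Summable a) : Continuous (gStar a) := by
  refine continuous_tsum (u := fun k ↦ |a k| * (1 / Real.log (Real.log 4 / Real.log 3)))
    (fun k ↦ ((continuous_gM (M := k + 4) (by lia)).const_mul _).div_const _)
    (ha.abs.mul_right _) fun k α ↦ ?_
  have ratio_nonneg : 0 ≤ gM (k + 4) α / Kconst (k + 4) :=
    div_nonneg (gM_nonneg _ α) (Kconst_pos (by lia)).le
  rw [mul_div_assoc, norm_mul, Real.norm_eq_abs, Real.norm_of_nonneg ratio_nonneg]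
  exact mul_le_mul_of_nonneg_left (gM_div_Kconst_le (by lia) α) (abs_nonneg _)

lemma integral_gStar_mul_log (ha : Summable a) :
    ∫ α in Set.Ioi (0 : ℝ), gStar a α * Real.log α = ∑' k, a k := by
  have gStar_mul_log (α : ℝ) : gStar a α * Real.log α =
      ∑' k, a k * (gM (k + 4) α * Real.log α) / Kconst (k + 4) := by
    rw [gStar, ← tsum_mul_right]
    exact tsum_congr fun k ↦ by ring
  simp only [gStar_mul_log]
  exact integral_tsum_mul_div_integral (fun k ↦ .of_forall (gM_mul_log_nonneg (k + 4)))
    (fun k ↦ (Kconst_pos (by lia)).ne') ha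

lemma integral_gStar_pos (ha_nonneg : ∀ k, 0 ≤ a k) (ha : Summable a) (ha_pos : ∃ k, 0 < a k) :
    0 < ∫ α in Set.Ioi (0 : ℝ), gStar a α := by
  obtain ⟨k, hk⟩ := ha_pos
  have log_moment_ne : ∫ α in Set.Ioi (0 : ℝ), gStar a α * Real.log α ≠ 0 := by
    rw [integral_gStar_mul_log ha]
    exact (ha.tsum_pos ha_nonneg k hk).ne'
  have integrableOn_gStar : IntegrableOn (gStar a) (Set.Ioi 0) :=
    integrable_of_integrable_mul_log one_lt_two (continuous_gStar ha).aestronglyMeasurable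
      (fun _ ↦ gStar_of_le_two a) (.of_integral_ne_zero log_moment_ne)
  exact integral_pos_of_integral_mul_ne_zero (.of_forall (gStar_nonneg ha_nonneg))
    integrableOn_gStar log_moment_ne

end GStar

lemma summable_zpow_neg_of_injective {ι : Type*} {r : ℝ} (hr : 1 < r) {φ : ι → ℕ}
    (hφ : Function.Injective φ) : Summable fun i ↦ r ^ (-(φ i : ℤ)) := by
  simpa only [zpow_neg, zpow_natCast, inv_pow, Function.comp_def] using
    (summable_geometric_of_lt_one (inv_nonneg.2 (by linarith))
      (inv_lt_one_of_one_lt₀ hr)).comp_injective hφ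

theorem stmt15_general (a : ℕ → ℝ) (ha_nonneg : ∀ k, 0 ≤ a k) (ha : Summable a)
    (ha_pos : ∃ k, 0 < a k)
    (gstar : ℝ → ℝ) (hgstar : ∀ α, gstar α = ∑' k, a k * gM (k + 4) α / Kconst (k + 4))
    (c₂ : ℝ) (hc₂ : c₂ = ∫ α in Set.Ioi (0 : ℝ), gstar α)
    (fstar : ℝ → ℝ) (hfstar : ∀ α, fstar α = gstar |α| / (2 * c₂)) :
    Continuous fstar ∧
    (∀ α, fstar (-α) = fstar α) ∧
    (∀ α, 0 ≤ fstar α) ∧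
    Integrable fstar ∧
    (∀ α, |α| ≤ 1 → fstar α = 0) ∧
    (∫ α, fstar α) = 1 ∧
    (∫ α in Set.Ioi (0 : ℝ), gstar α * Real.log α) = ∑' k, a k ∧
    (∫ α, Real.log (α ^ 2) * fstar α) = (2 / c₂) * ∑' k, a k := by
  obtain rfl : gstar = gStar a := funext hgstar
  subst hc₂
  obtain rfl : fstar = evenDensity (gStar a) := funext hfstar
  have c₂_ne : ∫ α in Set.Ioi (0 : ℝ), gStar a α ≠ 0 :=
    (integral_gStar_pos ha_nonneg ha ha_pos).ne'
  refine ⟨continuous_evenDensity (continuous_gStar ha), evenDensity_neg _,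
    evenDensity_nonneg (gStar_nonneg ha_nonneg), integrable_evenDensity c₂_ne,
    fun α hα ↦ evenDensity_eq_zero (fun _ ↦ gStar_of_le_two a) (hα.trans one_le_two),
    integral_evenDensity c₂_ne, integral_gStar_mul_log ha, ?_⟩
  rw [integral_log_sq_mul_evenDensity, integral_gStar_mul_log ha]

/-- Lemma 1 of the paper: for injective `φ`, the density
`f*(α) = g*(|α|)/(2c₂)` with `g* = Σ_{M≥4} 2^{-φ(M)} g_M/K_M` and
`c₂ = ∫₀^∞ g*` is a continuous, even, nonnegative density vanishing on `[-1,1]`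
with `∫ f* = 1`, `∫₀^∞ g*(α) ln α dα = Σ_{M≥4} 2^{-φ(M)}`, and
`∫ ln(α²) f*(α) dα = (2/c₂) Σ_{M≥4} 2^{-φ(M)}`. -/
theorem stmt15 (φ : ℕ → ℕ) (hinj : Function.Injective φ)
    (gstar : ℝ → ℝ)
    (hgstar : ∀ α, gstar α =
      ∑' k : ℕ, (2 : ℝ) ^ (-(φ (k + 4) : ℤ)) * gM (k + 4) α / Kconst (k + 4))
    (c₂ : ℝ) (hc₂ : c₂ = ∫ α in Set.Ioi (0 : ℝ), gstar α)
    (fstar : ℝ → ℝ) (hfstar : ∀ α, fstar α = gstar |α| / (2 * c₂)) :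
    Continuous fstar ∧
    (∀ α, fstar (-α) = fstar α) ∧
    (∀ α, 0 ≤ fstar α) ∧
    Integrable fstar ∧
    (∀ α, |α| ≤ 1 → fstar α = 0) ∧
    (∫ α, fstar α) = 1 ∧
    (∫ α in Set.Ioi (0 : ℝ), gstar α * Real.log α) =
      ∑' k : ℕ, (2 : ℝ) ^ (-(φ (k + 4) : ℤ)) ∧
    (∫ α, Real.log (α ^ 2) * fstar α) =
      (2 / c₂) * ∑' k : ℕ, (2 : ℝ) ^ (-(φ (k + 4) : ℤ)) :=
  stmt15_general _ (fun _ ↦ by positivity)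
    (summable_zpow_neg_of_injective one_lt_two (hinj.comp (add_left_injective 4)))
    ⟨0, by positivity⟩ gstar hgstar c₂ hc₂ fstar hfstar
end
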